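/- For every f ∈ C^r(𝒪_F,E) and every i ∈ I_{≤[r]}, the function D_i f belongs to C^{r−|i|}(𝒪_F,E); moreover there exists a constant C ∈ ℝ_{≥0}, independent of f, such that ‖D_i f‖_{C^{r−|i|}} ≤ C·‖f‖_{C^r} for all f ∈ C^r(𝒪_F,E) and all i ∈ I_{≤[r]}. In particular, for each i ∈ I_{≤[r]} the map f ↦ D_i f is a continuous linear map from C^r(𝒪_F,E) to C^{r−|i|}(𝒪_F,E). -/

import Mathlib

/-!
Setting (cf. the paper's notations): `O` plays the role of the ring of integers `𝒪_F` of a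
finite extension `F` of `ℚ_p`, `E` is the coefficient field (a finite extension of `ℚ_p`
with its p-adic absolute value, normalized by `|x| = p^{-val_F(x)}`, `val_F(p) = [F:ℚ_p]`),
`S` is the (finite) set of `ℚ_p`-algebra embeddings `F ↪ E`, restricted here to `O`,
`ν : O → ℝ` is the absolute value on `O` (the common restriction of the norm of `E` along any
embedding), `ϖ` is a fixed uniformizer with `ν ϖ = q⁻¹` where `q = p^f` is the cardinality
of the residue field, and `u * ϖ ^ e = p` records the ramification index `e`.
-/

open scoped Classical

noncomputable section

namespace CrPaper

structure Setting (S O E : Type*) [Fintype S] [CommRing O] [NormedField E] where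
  q : ℝ
  p : ℕ
  fdeg : ℕ
  hp : p.Prime
  hfdeg : 0 < fdeg
  hq : q = (p : ℝ) ^ fdeg
  emb : S → O →+* E
  emb_inj : ∀ s, Function.Injective (emb s)
  emb_distinct : Function.Injective emb
  ν : O → ℝ
  norm_emb : ∀ (s) (z : O), ‖emb s z‖ = ν z
  norm_le_one : ∀ (s) (z : O), ‖emb s z‖ ≤ 1
  norm_add_max : ∀ x y : E, ‖x + y‖ ≤ max ‖x‖ ‖y‖
  ϖ : O
  ν_ϖ : ν ϖ = q⁻¹
  mem_ball_iff : ∀ (y : O) (n : ℕ), (∃ z, y = ϖ ^ n * z) ↔ ν y ≤ q⁻¹ ^ n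
  ram : ∃ (e : ℕ) (u : O), 0 < e ∧ IsUnit u ∧ u * ϖ ^ e = (p : O)

variable {S O E : Type*} [Fintype S] [DecidableEq S] [CommRing O] [IsDomain O]
  [NormedField E] [CompleteSpace E] [CharZero E]

/-- The total weight `|i| = ∑ i_σ` of a multi-index. -/
def wt (i : S → ℕ) : ℕ := ∑ s, i s

/-- `i! = ∏ i_σ!` for a multi-index. -/
def mfact (i : S → ℕ) : ℕ := ∏ s, (i s).factorial

/-- The (finite) set `I_{≤N}` of multi-indices of total weight `≤ N`. -/
def Idx (S : Type*) [Fintype S] [DecidableEq S] (N : ℕ) : Finset (S → ℕ) :=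
  (Fintype.piFinset fun _ : S => Finset.range (N + 1)).filter fun i => wt i ≤ N

/-- `z^i = ∏_σ σ(z)^{i_σ}`. -/
def mpow (St : Setting S O E) (z : O) (i : S → ℕ) : E := ∏ s, St.emb s z ^ i s

/-- The Taylor remainder `ε_{f,N}(x,y) = f(x+y) − ∑_{|i|≤N} D_i f(x) y^i / i!`. -/
def epsTay (St : Setting S O E) (N : ℕ) (f : O → E) (D : (S → ℕ) → O → E) (x y : O) : E :=
  f (x + y) - ∑ i ∈ Idx S N, D i x * mpow St y i / (mfact i : E)

/-- `f` is of class `C^r` with the family of bounded functions `D` witnessing the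
definition: all `D_i` (`|i| ≤ ⌊r⌋`) are bounded and
`C_{f,r}(h) = sup_{x ∈ O, y ∈ ϖ^h O} |ε_{f,⌊r⌋}(x,y)| q^{rh} → 0` as `h → ∞`. -/
def IsCrWith (St : Setting S O E) (r : ℝ) (f : O → E) (D : (S → ℕ) → O → E) : Prop :=
  (∀ i ∈ Idx S ⌊r⌋₊, ∃ C : ℝ, ∀ x : O, ‖D i x‖ ≤ C) ∧
  ∀ ε : ℝ, 0 < ε → ∃ M : ℕ, ∀ h : ℕ, M ≤ h → ∀ x z : O,
    ‖epsTay St ⌊r⌋₊ f D x (St.ϖ ^ h * z)‖ * St.q ^ (r * (h : ℝ)) ≤ ε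

/-- `f` is of class `C^r`. -/
def IsCr (St : Setting S O E) (r : ℝ) (f : O → E) : Prop :=
  ∃ D, IsCrWith St r f D

/-- The `C^r`-norm of `f` (relative to the — unique — family `D`):
`max( sup_{i,x} |D_i f(x)/i!| , sup_{x,y} |ε_{f,⌊r⌋}(x,y)|/|y|^r )`. -/
def CrNorm (St : Setting S O E) (r : ℝ) (f : O → E) (D : (S → ℕ) → O → E) : ℝ :=
  max (⨆ i : (Idx S ⌊r⌋₊), ⨆ x : O, ‖D i.1 x / (mfact i.1 : E)‖)
      (⨆ x : O, ⨆ y : O, ‖epsTay St ⌊r⌋₊ f D x y‖ / St.ν y ^ r)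

/-!
For fixed `x` and `a`, expanding `f(x + ay + az)` around `x` and around `x + ay` gives
`∑_j (a^j / j!) ε_{D_j f}(x, ay) z^j = ε_f(x, a(y + z)) − ε_f(x + ay, az)`,
a polynomial in `z` whose values are controlled by the remainder of `f` on `aO`. Distinct
monomials `z ↦ z^j` are distinct characters of the monoid `O`, hence linearly independent by
Dedekind, and so the coefficients of a polynomial are bounded by a constant times its supremum on
`O`. This bounds `|a|^{|j|} |ε_{D_j f}(x, ay)|`: taking `a = ϖ^h` shows that `D_j f` is of class
`C^{r−|j|}`, and taking `y = 1` gives the estimate of norms.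
-/

section General

open Polynomial

/- An abelian group is not a finite union of subgroups of infinite index, and the locus where two
distinct homomorphisms into a torsion-free group agree has infinite index. -/
theorem exists_injective_apply {ι A B : Type*} [Finite ι] [AddCommGroup A] [AddCommGroup B]
    [IsAddTorsionFree B] {φ : ι → A →+ B} (hφ : Function.Injective φ) :
    ∃ a, Function.Injective fun i => φ i a := by
  by_contra! hcon
  have := Fintype.ofFinite ι
  let agree : ι × ι → Submodule ℤ A := fun q => (φ q.1 - φ q.2).ker.toIntSubmodule
  have mem_agree (q : ι × ι) (a : A) : a ∈ agree q ↔ φ q.1 a = φ q.2 a := sub_eq_zero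
  have hcover : ⋃ q ∈ (Finset.univ.filter fun q : ι × ι => q.1 ≠ q.2), (agree q : Set A) =
      Set.univ := by
    refine Set.eq_univ_of_forall fun a => ?_
    obtain ⟨i, j, hij, hne⟩ := Function.not_injective_iff.1 (hcon a)
    exact Set.mem_biUnion (x := (i, j)) (by simpa using hne) ((mem_agree (i, j) a).2 hij)
  obtain ⟨q, hq, hfin⟩ := Submodule.exists_finiteIndex_of_cover hcover
  refine (Finset.mem_filter.1 hq).2 (hφ (AddMonoidHom.ext fun a => ?_))
  obtain ⟨n, hn, -, hmem⟩ := AddSubgroup.exists_nsmul_mem_of_index_ne_zero hfin.index_ne_zero a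
  have hna : n • φ q.1 a = n • φ q.2 a := by
    simpa only [map_nsmul] using (mem_agree q (n • a)).1 hmem
  exact nsmul_right_injective hn.ne' hna

theorem rootMultiplicity_prod_X_sub_C_pow {ι R : Type*} [Fintype ι] [CommRing R] [IsDomain R]
    {a : ι → R} (ha : Function.Injective a) (n : ι → ℕ) (i : ι) :
    (∏ j, (X - C (a j)) ^ n j).rootMultiplicity (a i) = n i := by
  have hne : ∏ j, (X - C (a j)) ^ n j ≠ 0 :=
    Finset.prod_ne_zero_iff.2 fun j _ => pow_ne_zero _ (X_sub_C_ne_zero _)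
  rw [← count_roots, roots_prod _ _ hne, Multiset.count_bind, Finset.sum_map_val]
  simp [Multiset.count_singleton, ha.eq_iff]

theorem exists_norm_coeff_le_of_linearIndependent {ι X K : Type*} [Fintype ι] [NormedField K]
    {v : ι → X → K} (hv : LinearIndependent K v) :
    ∃ c : ℝ, 0 ≤ c ∧ ∀ (a : ι → K) (B : ℝ), (∀ x, ‖∑ i, a i * v i x‖ ≤ B) →
      ∀ i, ‖a i‖ ≤ c * B := by
  have hbound (w : ι → K) : ∃ c : ℝ, 0 ≤ c ∧ ∀ (a : ι → K) (B : ℝ),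
      (∀ x, ‖∑ i, a i * v i x‖ ≤ B) → ‖∑ i, a i * w i‖ ≤ c * B := by
    have hw : w ∈ Submodule.span K (Set.range (flip v)) :=
      span_flip_eq_top_iff_linearIndependent.2 hv ▸ Submodule.mem_top
    induction hw using Submodule.span_induction with
    | mem w hw =>
      obtain ⟨x, rfl⟩ := hw
      exact ⟨1, zero_le_one, fun a B hB => (hB x).trans_eq (one_mul B).symm⟩
    | zero => exact ⟨0, le_rfl, by simp⟩
    | add w₁ w₂ _ _ h₁ h₂ =>
      obtain ⟨c₁, hc₁, h₁⟩ := h₁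
      obtain ⟨c₂, hc₂, h₂⟩ := h₂
      refine ⟨c₁ + c₂, add_nonneg hc₁ hc₂, fun a B hB => ?_⟩
      simp only [Pi.add_apply, mul_add, Finset.sum_add_distrib, add_mul]
      exact norm_add_le_of_le (h₁ a B hB) (h₂ a B hB)
    | smul t w _ h =>
      obtain ⟨c, hc, h⟩ := h
      refine ⟨‖t‖ * c, by positivity, fun a B hB => ?_⟩
      simp only [Pi.smul_apply, smul_eq_mul, mul_left_comm _ t, ← Finset.mul_sum, norm_mul,
        mul_assoc]
      exact mul_le_mul_of_nonneg_left (h a B hB) (norm_nonneg t)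
  choose c hc h using fun i => hbound (Pi.single i 1)
  refine ⟨∑ i, c i, Finset.sum_nonneg fun i _ => hc i, fun a B hB i => ?_⟩
  obtain ⟨x, -⟩ := Function.ne_iff.1 (hv.ne_zero i)
  have hB0 : 0 ≤ B := (norm_nonneg _).trans (hB x)
  calc ‖a i‖ ≤ c i * B := by simpa [Pi.single_apply] using h i a B hB
    _ ≤ (∑ i, c i) * B := by
      gcongr
      exact Finset.single_le_sum (fun i _ => hc i) (Finset.mem_univ i)

theorem add_pow_div_factorial {K : Type*} [Semifield K] [CharZero K] (a b : K) (n : ℕ) :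
    (a + b) ^ n / (n.factorial : K) =
      ∑ m ∈ Finset.Iic n,
        (a ^ m / (m.factorial : K)) * (b ^ (n - m) / ((n - m).factorial : K)) := by
  rw [add_pow, Finset.sum_div, Nat.range_succ_eq_Iic]
  refine Finset.sum_congr rfl fun m hm => ?_
  have hn : (n.factorial : K) ≠ 0 := Nat.cast_ne_zero.2 n.factorial_ne_zero
  rw [Nat.cast_choose K (Finset.mem_Iic.1 hm)]
  field_simp

theorem norm_natCast_le_of_dvd {R : Type*} [SeminormedRing R] [NormOneClass R]
    [IsUltrametricDist R] {m n : ℕ} (h : m ∣ n) : ‖(n : R)‖ ≤ ‖(m : R)‖ := by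
  obtain ⟨k, rfl⟩ := h
  rw [Nat.cast_mul]
  exact (norm_mul_le _ _).trans
    (mul_le_of_le_one_right (norm_nonneg _) (IsUltrametricDist.norm_natCast_le_one R k))

theorem inv_pow_rpow {q : ℝ} (hq : 0 ≤ q) (n : ℕ) (r : ℝ) :
    (q⁻¹ ^ n) ^ r = (q ^ (r * (n : ℝ)))⁻¹ := by
  rw [inv_pow, Real.inv_rpow (by positivity), ← Real.rpow_natCast_mul hq, mul_comm]

end General

section MultiIndex

omit [DecidableEq S]

theorem wt_add (i j : S → ℕ) : wt (i + j) = wt i + wt j := Finset.sum_add_distrib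

theorem mfact_dvd_mfact_add (i j : S → ℕ) : mfact j ∣ mfact (i + j) :=
  Finset.prod_dvd_prod_of_dvd _ _ fun _ _ => Nat.factorial_dvd_factorial (Nat.le_add_left _ _)

theorem mfact_ne_zero (i : S → ℕ) : mfact i ≠ 0 :=
  Finset.prod_ne_zero_iff.2 fun _ _ => Nat.factorial_ne_zero _

end MultiIndex

theorem mem_Idx {N : ℕ} {i : S → ℕ} : i ∈ Idx S N ↔ wt i ≤ N := by
  simp only [Idx, Finset.mem_filter, Fintype.mem_piFinset, Finset.mem_range_succ_iff,
    and_iff_right_iff_imp]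
  exact fun h s => (Finset.single_le_sum_of_canonicallyOrdered (Finset.mem_univ s)).trans h

theorem zero_mem_Idx (N : ℕ) : (0 : S → ℕ) ∈ Idx S N := mem_Idx.2 (by simp [wt])

theorem add_mem_Idx {N : ℕ} {i k : S → ℕ} (hi : i ∈ Idx S N) (hk : k ∈ Idx S (N - wt i)) :
    i + k ∈ Idx S N := by
  rw [mem_Idx] at hi hk ⊢
  rw [wt_add]
  omega

section Monomial

omit [DecidableEq S] [IsDomain O] [CompleteSpace E] [CharZero E]

theorem Setting.isUltrametricDist (St : Setting S O E) : IsUltrametricDist E :=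
  IsUltrametricDist.isUltrametricDist_of_forall_norm_add_le_max_norm St.norm_add_max

theorem Setting.one_lt_q (St : Setting S O E) : 1 < St.q := by
  rw [St.hq]
  exact one_lt_pow₀ (by exact_mod_cast St.hp.one_lt) St.hfdeg.ne'

/-- The monomial `z ↦ z^i` as a character of the multiplicative monoid `O`. -/
def mpowHom (St : Setting S O E) (i : S → ℕ) : O →* E where
  toFun z := mpow St z i
  map_one' := by simp [mpow]
  map_mul' x y := by simp [mpow, mul_pow, Finset.prod_mul_distrib]

theorem mpow_mul (St : Setting S O E) (x y : O) (i : S → ℕ) :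
    mpow St (x * y) i = mpow St x i * mpow St y i := (mpowHom St i).map_mul x y

theorem norm_mpow (St : Setting S O E) (z : O) (i : S → ℕ) : ‖mpow St z i‖ = St.ν z ^ wt i := by
  simp only [mpow, wt, norm_prod, norm_pow, St.norm_emb, Finset.prod_pow_eq_pow_sum]

theorem norm_mpow_le_one (St : Setting S O E) (z : O) (i : S → ℕ) : ‖mpow St z i‖ ≤ 1 := by
  simp only [mpow, norm_prod, norm_pow]
  exact Finset.prod_le_one (fun _ _ => by positivity)
    fun s _ => pow_le_one₀ (norm_nonneg _) (St.norm_le_one s z)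

/- Evaluating at `n + y` with `n ∈ ℕ` and `y` separating the embeddings turns `z^i` into the
polynomial `∏_σ (n + σ(y))^{i_σ}` in `n`, whose roots recover `i`. -/
theorem mpowHom_injective [CharZero E] (St : Setting S O E) :
    Function.Injective (mpowHom St) := by
  intro i j hij
  obtain ⟨y, hy⟩ := exists_injective_apply (φ := fun s => (St.emb s : O →+ E))
    fun s t hst => St.emb_distinct (RingHom.ext fun z => DFunLike.congr_fun hst z)
  let P (i : S → ℕ) : Polynomial E :=
    ∏ s, (Polynomial.X - Polynomial.C (-St.emb s y)) ^ i s
  have eval_P (i : S → ℕ) (n : ℕ) : (P i).eval (n : E) = mpowHom St i (n + y) := by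
    simp [P, Polynomial.eval_prod, mpowHom, mpow]
  have hP : P i = P j := by
    refine Polynomial.eq_of_infinite_eval_eq _ _
      (Set.infinite_of_injective_forall_mem Nat.cast_injective fun n : ℕ => ?_)
    simp only [Set.mem_ofPred_eq, eval_P, hij]
  funext s
  have hmult := rootMultiplicity_prod_X_sub_C_pow (neg_injective.comp hy)
  exact (hmult i s).symm.trans ((congrArg _ hP).trans (hmult j s))

theorem linearIndependent_mpow [CharZero E] (St : Setting S O E) :
    LinearIndependent E fun (i : S → ℕ) (z : O) => mpow St z i :=
  (linearIndependent_monoidHom O E).comp (mpowHom St) (mpowHom_injective St)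

theorem norm_mpow_uniformizer_pow (St : Setting S O E) (h : ℕ) (i : S → ℕ) :
    ‖mpow St (St.ϖ ^ h) i‖ = (St.q ^ ((wt i : ℝ) * (h : ℝ)))⁻¹ := by
  have hpow : mpow St (St.ϖ ^ h) i = mpow St St.ϖ i ^ h := map_pow (mpowHom St i) St.ϖ h
  rw [hpow, norm_pow, norm_mpow, St.ν_ϖ, ← pow_mul, mul_comm, pow_mul,
    ← inv_pow_rpow (zero_lt_one.trans St.one_lt_q).le, Real.rpow_natCast]

end Monomial

section AbsoluteValue

omit [DecidableEq S] [IsDomain O] [CompleteSpace E] [CharZero E]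

variable [Nonempty S] (St : Setting S O E)

namespace Setting

theorem ν_nonneg (y : O) : 0 ≤ St.ν y :=
  St.norm_emb (Classical.arbitrary S) y ▸ norm_nonneg _

theorem ν_le_one (y : O) : St.ν y ≤ 1 :=
  St.norm_emb (Classical.arbitrary S) y ▸ St.norm_le_one _ y

theorem ν_pos {y : O} (hy : y ≠ 0) : 0 < St.ν y :=
  St.norm_emb (Classical.arbitrary S) y ▸
    norm_pos_iff.2 ((map_ne_zero_iff _ (St.emb_inj _)).2 hy)

theorem ν_mul (y z : O) : St.ν (y * z) = St.ν y * St.ν z := by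
  simp only [← St.norm_emb (Classical.arbitrary S), map_mul, norm_mul]

/- `St.ν` is not assumed to take values in `q^ℤ`, so a ball `ϖ^h O` containing `y` is only
comparable to `|y|` up to a factor `q`. -/
theorem exists_eq_uniformizer_pow_mul {y : O} (hy : y ≠ 0) :
    ∃ (h : ℕ) (z : O), y = St.ϖ ^ h * z ∧ St.q⁻¹ ^ (h + 1) < St.ν y := by
  obtain ⟨h, hlt, hle⟩ := exists_nat_pow_near_of_lt_one (St.ν_pos hy) (St.ν_le_one y)
    (inv_pos.2 (zero_lt_one.trans St.one_lt_q)) (inv_lt_one_of_one_lt₀ St.one_lt_q)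
  obtain ⟨z, hz⟩ := (St.mem_ball_iff y h).2 hle
  exact ⟨h, z, hz, hlt⟩

end Setting

end AbsoluteValue

section Remainder

omit [IsDomain O] [CompleteSpace E] [CharZero E]

theorem exists_norm_coeff_mpow_le [CharZero E] (St : Setting S O E) (N : ℕ) :
    ∃ c : ℝ, 0 ≤ c ∧ ∀ (a : (S → ℕ) → E) (B : ℝ),
      (∀ z, ‖∑ i ∈ Idx S N, a i * mpow St z i‖ ≤ B) → ∀ i ∈ Idx S N, ‖a i‖ ≤ c * B := by
  obtain ⟨c, hc, h⟩ := exists_norm_coeff_le_of_linearIndependent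
    ((linearIndependent_mpow St).comp _ (Subtype.val_injective (p := (· ∈ Idx S N))))
  refine ⟨c, hc, fun a B hB i hi => h (fun i => a i) B (fun z => ?_) ⟨i, hi⟩⟩
  exact (congrArg norm (Finset.sum_coe_sort (Idx S N) fun i => a i * mpow St z i)).trans_le (hB z)

theorem mpow_add_div_mfact [CharZero E] (St : Setting S O E) (y z : O) (i : S → ℕ) :
    mpow St (y + z) i / (mfact i : E) =
      ∑ j ∈ Finset.Iic i,
        (mpow St y j / (mfact j : E)) * (mpow St z (i - j) / (mfact (i - j) : E)) := by
  simp only [mpow, mfact, Nat.cast_prod, ← Finset.prod_div_distrib, map_add,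
    add_pow_div_factorial, ← Finset.prod_mul_distrib, Pi.sub_apply, Finset.prod_univ_sum]
  -- In a product of orders, `Finset.Iic i` is defined as the product of the `Finset.Iic (i s)`.
  rfl

/-- The family of derivatives of `D_i f`, given by `D_k (D_i f) = D_{i+k} f`. -/
def shiftFamily (D : (S → ℕ) → O → E) (i : S → ℕ) : (S → ℕ) → O → E := fun k => D (i + k)

theorem sum_mul_mpow_add_div_mfact [CharZero E] (St : Setting S O E) (N : ℕ)
    (D : (S → ℕ) → O → E) (x y z : O) :
    ∑ i ∈ Idx S N, D i x * mpow St (y + z) i / (mfact i : E) =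
      ∑ j ∈ Idx S N, mpow St z j / (mfact j : E) *
        ∑ k ∈ Idx S (N - wt j), shiftFamily D j k x * mpow St y k / (mfact k : E) := by
  simp_rw [add_comm y z, mul_div_assoc, mpow_add_div_mfact, Finset.mul_sum]
  rw [Finset.sum_sigma', Finset.sum_sigma']
  have add_sub_of_mem {i j : S → ℕ} (h : j ∈ Finset.Iic i) : j + (i - j) = i :=
    add_tsub_cancel_of_le (Finset.mem_Iic.1 h)
  refine Finset.sum_bij' (fun p _ => ⟨p.2, p.1 - p.2⟩) (fun p _ => ⟨p.1 + p.2, p.1⟩) ?_ ?_ ?_ ?_ ?_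
  · rintro ⟨i, j⟩ h
    simp only [Finset.mem_sigma, mem_Idx] at h ⊢
    have hwt := wt_add j (i - j)
    rw [add_sub_of_mem h.2] at hwt
    omega
  · rintro ⟨j, k⟩ h
    simp only [Finset.mem_sigma, mem_Idx, wt_add, Finset.mem_Iic] at h ⊢
    exact ⟨by omega, le_self_add⟩
  · rintro ⟨i, j⟩ h
    simp only [add_sub_of_mem (Finset.mem_sigma.1 h).2]
  · rintro ⟨j, k⟩ -
    simp only [add_tsub_cancel_left]
  · rintro ⟨i, j⟩ h
    simp only [shiftFamily, add_sub_of_mem (Finset.mem_sigma.1 h).2]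
    ring

theorem sum_mpow_mul_epsTay_shiftFamily [CharZero E] (St : Setting S O E) (N : ℕ) (f : O → E)
    (D : (S → ℕ) → O → E) (x y z : O) :
    ∑ j ∈ Idx S N, mpow St z j / (mfact j : E) * epsTay St (N - wt j) (D j) (shiftFamily D j) x y =
      epsTay St N f D x (y + z) - epsTay St N f D (x + y) z := by
  have hcomm : ∑ j ∈ Idx S N, mpow St z j / (mfact j : E) * D j (x + y) =
      ∑ j ∈ Idx S N, D j (x + y) * mpow St z j / (mfact j : E) :=
    Finset.sum_congr rfl fun j _ => by ring
  simp only [epsTay, mul_sub, Finset.sum_sub_distrib]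
  rw [sum_mul_mpow_add_div_mfact, hcomm, add_assoc]
  ring

theorem exists_norm_epsTay_shiftFamily_le [CharZero E] (St : Setting S O E) (N : ℕ) :
    ∃ c : ℝ, 0 ≤ c ∧ ∀ (f : O → E) (D : (S → ℕ) → O → E) (a : O) (B : ℝ),
      (∀ x z, ‖epsTay St N f D x (a * z)‖ ≤ B) → ∀ j ∈ Idx S N, ∀ x y,
        ‖mpow St a j‖ * ‖epsTay St (N - wt j) (D j) (shiftFamily D j) x (a * y)‖ ≤ c * B := by
  have := St.isUltrametricDist
  obtain ⟨c, hc, hcoeff⟩ := exists_norm_coeff_mpow_le St N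
  refine ⟨c, hc, fun f D a B hB j hj x y => ?_⟩
  let coeff (j : S → ℕ) : E :=
    mpow St a j / (mfact j : E) * epsTay St (N - wt j) (D j) (shiftFamily D j) x (a * y)
  have heval (z : O) : ∑ i ∈ Idx S N, coeff i * mpow St z i =
      epsTay St N f D x (a * (y + z)) - epsTay St N f D (x + a * y) (a * z) := by
    rw [mul_add, ← sum_mpow_mul_epsTay_shiftFamily]
    refine Finset.sum_congr rfl fun i _ => ?_
    rw [mpow_mul]
    ring
  have hmfact : ‖(mfact j : E)‖ ≤ 1 := IsUltrametricDist.norm_natCast_le_one E _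
  calc ‖mpow St a j‖ * ‖epsTay St (N - wt j) (D j) (shiftFamily D j) x (a * y)‖
      ≤ ‖coeff j‖ := by
        rw [norm_mul, norm_div]
        gcongr
        exact le_div_self (norm_nonneg _)
          (norm_pos_iff.2 (Nat.cast_ne_zero.2 (mfact_ne_zero j))) hmfact
    _ ≤ c * B := hcoeff coeff B (fun z => by
        rw [heval, sub_eq_add_neg]
        exact (St.norm_add_max _ _).trans (max_le (hB _ _) ((norm_neg _).trans_le (hB _ _)))) j hj

variable {St : Setting S O E} {r : ℝ} {f : O → E} {D : (S → ℕ) → O → E} {i : S → ℕ}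

theorem IsCrWith.epsTay_zero (hf : IsCrWith St r f D) (hr : 0 ≤ r) (x : O) :
    epsTay St ⌊r⌋₊ f D x 0 = 0 := by
  rw [← norm_le_zero_iff]
  refine le_of_forall_pos_le_add fun ε hε => ?_
  obtain ⟨M, hM⟩ := hf.2 ε hε
  have hq : 1 ≤ St.q ^ (r * (M : ℝ)) := Real.one_le_rpow St.one_lt_q.le (by positivity)
  calc ‖epsTay St ⌊r⌋₊ f D x 0‖ ≤ ‖epsTay St ⌊r⌋₊ f D x 0‖ * St.q ^ (r * (M : ℝ)) :=
        le_mul_of_one_le_right (norm_nonneg _) hq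
    _ ≤ 0 + ε := by simpa using hM M le_rfl x 0

theorem IsCrWith.apply_zero (hf : IsCrWith St r f D) (hr : 0 ≤ r) : D 0 = f := by
  funext x
  have hmpow {i : S → ℕ} (hi : i ≠ 0) : mpow St 0 i = 0 := by
    obtain ⟨s, hs⟩ := Function.ne_iff.1 hi
    exact Finset.prod_eq_zero (Finset.mem_univ s) (by simpa using hs)
  have hsum : ∑ i ∈ Idx S ⌊r⌋₊, D i x * mpow St 0 i / (mfact i : E) = D 0 x := by
    rw [Finset.sum_eq_single_of_mem 0 (zero_mem_Idx _)
      fun i _ hi => by rw [hmpow hi, mul_zero, zero_div]]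
    simp [mpow, mfact]
  have h0 := hf.epsTay_zero hr x
  rw [epsTay, hsum, add_zero, sub_eq_zero] at h0
  exact h0.symm

theorem IsCrWith.exists_norm_epsTay_le (hf : IsCrWith St r f D) (hr : 0 ≤ r) :
    ∃ K, ∀ x y, ‖epsTay St ⌊r⌋₊ f D x y‖ ≤ K := by
  choose! K hK using hf.1
  refine ⟨K 0 + ∑ i ∈ Idx S ⌊r⌋₊, K i / ‖(mfact i : E)‖, fun x y => ?_⟩
  refine norm_sub_le_of_le (hf.apply_zero hr ▸ hK 0 (zero_mem_Idx _) _)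
    (norm_sum_le_of_le _ fun i hi => ?_)
  rw [norm_div, norm_mul]
  gcongr
  exact (mul_le_of_le_one_right (norm_nonneg _) (norm_mpow_le_one St y i)).trans (hK i hi x)

theorem IsCrWith.exists_norm_epsTay_le_mul_rpow [Nonempty S] (hf : IsCrWith St r f D)
    (hr : 0 ≤ r) : ∃ K, 0 ≤ K ∧ ∀ x y, ‖epsTay St ⌊r⌋₊ f D x y‖ ≤ K * St.ν y ^ r := by
  obtain ⟨K, hK⟩ := hf.exists_norm_epsTay_le hr
  obtain ⟨M, hM⟩ := hf.2 1 one_pos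
  have hq := zero_lt_one.trans St.one_lt_q
  have hK0 : 0 ≤ K := (norm_nonneg _).trans (hK 0 0)
  refine ⟨St.q ^ r + K * St.q ^ (r * (M : ℝ)), by positivity, fun x y => ?_⟩
  have hν : 0 ≤ St.ν y ^ r := Real.rpow_nonneg (St.ν_nonneg y) r
  rcases eq_or_ne y 0 with rfl | hy
  · rw [hf.epsTay_zero hr, norm_zero]
    positivity
  obtain ⟨h, z, hyz, hlt⟩ := St.exists_eq_uniformizer_pow_mul hy
  rw [add_mul]
  rcases le_or_gt M h with hMh | hhM
  · have hnear : ‖epsTay St ⌊r⌋₊ f D x y‖ ≤ (St.q ^ (r * (h : ℝ)))⁻¹ := by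
      rw [← one_div, le_div_iff₀ (by positivity), hyz]
      exact hM h hMh x z
    calc ‖epsTay St ⌊r⌋₊ f D x y‖ ≤ (St.q ^ (r * (h : ℝ)))⁻¹ := hnear
      _ = St.q ^ r * (St.q⁻¹ ^ (h + 1)) ^ r := by
        rw [inv_pow_rpow hq.le, Nat.cast_succ, mul_add_one, Real.rpow_add hq]
        field_simp
      _ ≤ St.q ^ r * St.ν y ^ r := by gcongr
      _ ≤ St.q ^ r * St.ν y ^ r + K * St.q ^ (r * (M : ℝ)) * St.ν y ^ r :=
        le_add_of_nonneg_right (by positivity)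
  · have hfar : St.q⁻¹ ^ M ≤ St.ν y :=
      (pow_le_pow_of_le_one (by positivity) (inv_le_one_of_one_le₀ St.one_lt_q.le) hhM).trans hlt.le
    calc ‖epsTay St ⌊r⌋₊ f D x y‖ ≤ K := hK x y
      _ = K * St.q ^ (r * (M : ℝ)) * (St.q⁻¹ ^ M) ^ r := by
        rw [inv_pow_rpow hq.le]
        field_simp
      _ ≤ K * St.q ^ (r * (M : ℝ)) * St.ν y ^ r := by gcongr
      _ ≤ St.q ^ r * St.ν y ^ r + K * St.q ^ (r * (M : ℝ)) * St.ν y ^ r :=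
        le_add_of_nonneg_left (by positivity)

theorem CrNorm_nonneg : 0 ≤ CrNorm St r f D :=
  le_max_of_le_left (Real.iSup_nonneg fun _ => Real.iSup_nonneg fun _ => norm_nonneg _)

theorem IsCrWith.norm_div_mfact_le_CrNorm (hf : IsCrWith St r f D) (hi : i ∈ Idx S ⌊r⌋₊) (x : O) :
    ‖D i x / (mfact i : E)‖ ≤ CrNorm St r f D := by
  obtain ⟨K, hK⟩ := hf.1 i hi
  have hbdd : BddAbove (Set.range fun x => ‖D i x / (mfact i : E)‖) := by
    refine ⟨K / ‖(mfact i : E)‖, Set.forall_mem_range.2 fun x => ?_⟩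
    rw [norm_div]
    gcongr
    exact hK x
  exact le_max_of_le_left <|
    (le_ciSup hbdd x).trans (le_ciSup (f := fun i : Idx S ⌊r⌋₊ => ⨆ x, ‖D i.1 x / (mfact i.1 : E)‖)
      (Set.finite_range _).bddAbove ⟨i, hi⟩)

theorem IsCrWith.norm_epsTay_le_CrNorm_mul_rpow [Nonempty S] (hf : IsCrWith St r f D) (hr : 0 ≤ r)
    (x y : O) : ‖epsTay St ⌊r⌋₊ f D x y‖ ≤ CrNorm St r f D * St.ν y ^ r := by
  rcases eq_or_ne y 0 with rfl | hy
  · rw [hf.epsTay_zero hr, norm_zero]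
    exact mul_nonneg CrNorm_nonneg (Real.rpow_nonneg (St.ν_nonneg 0) r)
  obtain ⟨K, hK0, hK⟩ := hf.exists_norm_epsTay_le_mul_rpow hr
  have hquot (x y : O) : ‖epsTay St ⌊r⌋₊ f D x y‖ / St.ν y ^ r ≤ K :=
    div_le_of_le_mul₀ (Real.rpow_nonneg (St.ν_nonneg y) r) hK0 (hK x y)
  rw [← div_le_iff₀ (Real.rpow_pos_of_pos (St.ν_pos hy) r)]
  refine le_max_of_le_right (le_ciSup_of_le ⟨K, Set.forall_mem_range.2 fun x => ?_⟩ x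
    (le_ciSup (f := fun y => ‖epsTay St ⌊r⌋₊ f D x y‖ / St.ν y ^ r)
      ⟨K, Set.forall_mem_range.2 (hquot x)⟩ y))
  exact ciSup_le (hquot x)

theorem IsCrWith.shift [CharZero E] (hf : IsCrWith St r f D) (hi : i ∈ Idx S ⌊r⌋₊) :
    IsCrWith St (r - (wt i : ℝ)) (D i) (shiftFamily D i) := by
  have hq := zero_lt_one.trans St.one_lt_q
  obtain ⟨c, hc, hrem⟩ := exists_norm_epsTay_shiftFamily_le St ⌊r⌋₊
  rw [IsCrWith, Nat.floor_sub_natCast]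
  refine ⟨fun k hk => hf.1 _ (add_mem_Idx hi hk), fun ε hε => ?_⟩
  obtain ⟨M, hM⟩ := hf.2 (ε / (c + 1)) (by positivity)
  refine ⟨M, fun h hMh x z => ?_⟩
  have hscaled := hrem f D (St.ϖ ^ h) (ε / (c + 1) / St.q ^ (r * (h : ℝ)))
    (fun x z => (le_div_iff₀ (by positivity)).2 (hM h hMh x z)) i hi x z
  rw [norm_mpow_uniformizer_pow] at hscaled
  set rem := ‖epsTay St (⌊r⌋₊ - wt i) (D i) (shiftFamily D i) x (St.ϖ ^ h * z)‖
  calc rem * St.q ^ ((r - (wt i : ℝ)) * (h : ℝ))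
      = (St.q ^ ((wt i : ℝ) * (h : ℝ)))⁻¹ * rem * St.q ^ (r * (h : ℝ)) := by
        rw [sub_mul, Real.rpow_sub hq]
        ring
    _ ≤ c * (ε / (c + 1) / St.q ^ (r * (h : ℝ))) * St.q ^ (r * (h : ℝ)) := by gcongr
    _ = c / (c + 1) * ε := by field_simp
    _ ≤ ε := mul_le_of_le_one_left hε.le (div_le_one_of_le₀ (by linarith) (by linarith))

theorem IsCrWith.norm_shiftFamily_div_mfact_le [CharZero E] (hf : IsCrWith St r f D)
    (hi : i ∈ Idx S ⌊r⌋₊) {k : S → ℕ} (hk : k ∈ Idx S (⌊r⌋₊ - wt i)) (x : O) :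
    ‖shiftFamily D i k x / (mfact k : E)‖ ≤ CrNorm St r f D := by
  have := St.isUltrametricDist
  refine le_trans ?_ (hf.norm_div_mfact_le_CrNorm (add_mem_Idx hi hk) x)
  rw [norm_div, norm_div, shiftFamily]
  exact div_le_div_of_nonneg_left (norm_nonneg _)
    (norm_pos_iff.2 (Nat.cast_ne_zero.2 (mfact_ne_zero _)))
    (norm_natCast_le_of_dvd (mfact_dvd_mfact_add i k))

theorem exists_norm_epsTay_shiftFamily_div_le [CharZero E] [Nonempty S] (St : Setting S O E) {r : ℝ}
    (hr : 0 ≤ r) : ∃ c : ℝ, ∀ (f : O → E) (D : (S → ℕ) → O → E), IsCrWith St r f D →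
      ∀ i ∈ Idx S ⌊r⌋₊, ∀ x y,
        ‖epsTay St ⌊r - (wt i : ℝ)⌋₊ (D i) (shiftFamily D i) x y‖ / St.ν y ^ (r - (wt i : ℝ)) ≤
          c * CrNorm St r f D := by
  obtain ⟨c, hc, hrem⟩ := exists_norm_epsTay_shiftFamily_le St ⌊r⌋₊
  refine ⟨c, fun f D hf i hi x y => ?_⟩
  rcases eq_or_ne y 0 with rfl | hy
  · have hir : (wt i : ℝ) ≤ r := (Nat.le_floor_iff hr).1 (mem_Idx.1 hi)
    rw [(hf.shift hi).epsTay_zero (sub_nonneg.2 hir), norm_zero, zero_div]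
    exact mul_nonneg hc CrNorm_nonneg
  have hν := St.ν_pos hy
  have hball (x z : O) : ‖epsTay St ⌊r⌋₊ f D x (y * z)‖ ≤ CrNorm St r f D * St.ν y ^ r := by
    refine (hf.norm_epsTay_le_CrNorm_mul_rpow hr x _).trans ?_
    gcongr
    · exact CrNorm_nonneg
    · exact St.ν_nonneg _
    · exact St.ν_mul y z ▸ mul_le_of_le_one_right hν.le (St.ν_le_one z)
  have hscaled := hrem f D y _ hball i hi x 1
  rw [norm_mpow, mul_one, mul_comm, ← le_div_iff₀ (by positivity)] at hscaled
  rw [Nat.floor_sub_natCast, div_le_iff₀ (by positivity), Real.rpow_sub_natCast hν.ne', mul_assoc,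
    mul_div_assoc']
  simpa only [mul_div_assoc] using hscaled

theorem statement4_general [CharZero E] (St : Setting S O E) (r : ℝ) (hr : 0 ≤ r) :
    ∃ C : ℝ, 0 ≤ C ∧
      ∀ (f : O → E) (D : (S → ℕ) → O → E), IsCrWith St r f D →
        ∀ i ∈ Idx S ⌊r⌋₊, IsCrWith St (r - (wt i : ℝ)) (D i) (shiftFamily D i) ∧
          CrNorm St (r - (wt i : ℝ)) (D i) (shiftFamily D i) ≤ C * CrNorm St r f D := by
  rcases isEmpty_or_nonempty S with hS | hS
  · -- Without embeddings `St.ν` is not tied to any norm, but `0` is then the only multi-index.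
    refine ⟨1, zero_le_one, fun f D hf i hi => ⟨hf.shift hi, ?_⟩⟩
    have hD : shiftFamily D i = D := funext fun k => congrArg D (Subsingleton.elim _ _)
    rw [hD, Subsingleton.elim i 0, hf.apply_zero hr]
    simp [wt]
  obtain ⟨c, hrem⟩ := exists_norm_epsTay_shiftFamily_div_le St hr
  refine ⟨max 1 c, by positivity, fun f D hf i hi => ⟨hf.shift hi, ?_⟩⟩
  have hN : 0 ≤ CrNorm St r f D := CrNorm_nonneg
  have hC : 0 ≤ max 1 c * CrNorm St r f D := by positivity
  refine max_le (Real.iSup_le (fun k => Real.iSup_le (fun x => ?_) hC) hC)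
    (Real.iSup_le (fun x => Real.iSup_le (fun y => ?_) hC) hC)
  · exact (hf.norm_shiftFamily_div_mfact_le hi (Nat.floor_sub_natCast r (wt i) ▸ k.2) x).trans
      (le_mul_of_one_le_left hN (le_max_left _ _))
  · exact (hrem f D hf i hi x y).trans (by gcongr; exact le_max_right _ _)

end Remainder

/-- for `f ∈ C^r` and `i ∈ I_{≤[r]}`, `D_i f ∈ C^{r−|i|}`, and there is a constant
`C ≥ 0`, independent of `f`, with `‖D_i f‖_{C^{r−|i|}} ≤ C ‖f‖_{C^r}`; in particular
`f ↦ D_i f` is continuous from `C^r` to `C^{r−|i|}`. -/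
theorem statement4 (St : Setting S O E) (r : ℝ) (hr : 0 ≤ r) :
    ∃ C : ℝ, 0 ≤ C ∧
      ∀ (f : O → E) (D : (S → ℕ) → O → E), IsCrWith St r f D →
        ∀ i ∈ Idx S ⌊r⌋₊, ∃ D' : (S → ℕ) → O → E,
          IsCrWith St (r - (wt i : ℝ)) (D i) D' ∧
          CrNorm St (r - (wt i : ℝ)) (D i) D' ≤ C * CrNorm St r f D := by
  obtain ⟨C, hC, h⟩ := statement4_general St r hr
  exact ⟨C, hC, fun f D hf i hi => ⟨shiftFamily D i, h f D hf i hi⟩⟩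

end CrPaper
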